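/- arXiv:2312.07864 — 2 statements merged into one kernel-verified Lean document; each statement's English description precedes it below -/
import Mathlib

section
/- Let Φ ∈ ℂ^{L×K} and U ∈ ℂ^{K×r} with U^H U = I_r, and suppose U^H Φ^H Φ U is invertible. Set A₂ = U (U^H Φ^H Φ U)⁻¹ U^H Φ^H. Let S ∈ ℂ^{r×r}, put R_x = U S U^H, let R_w ∈ ℂ^{L×L}, let c₁, c₂ be real numbers, and define R_y = Φ R_x Φ^H + c₁ R_w + c₂ I_L. Then A₂ Φ U = U, and Re trace(R_x) − 2 Re trace(A₂ Φ R_x) + Re trace(A₂ R_y A₂^H) = c₁ · Re trace(A₂ R_w A₂^H) + c₂ · Re trace((U^H Φ^H Φ U)⁻¹). -/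
open Matrix

/-- Simplification of the RS-LS channel-estimation MSE (eq. (33) of the paper):
with `A₂ = U(UᴴΦᴴΦU)⁻¹UᴴΦᴴ`, `R_x = U S Uᴴ` and
`R_y = Φ R_x Φᴴ + c₁ R_w + c₂ I`, one has `A₂ Φ U = U` and
`Re tr R_x − 2 Re tr(A₂ Φ R_x) + Re tr(A₂ R_y A₂ᴴ)
  = c₁ Re tr(A₂ R_w A₂ᴴ) + c₂ Re tr((UᴴΦᴴΦU)⁻¹)`. -/
theorem rsls_mse_simplification {L K r : ℕ}
    (Φ : Matrix (Fin L) (Fin K) ℂ) (U : Matrix (Fin K) (Fin r) ℂ)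
    (hU : Uᴴ * U = 1)
    (hinv : IsUnit (Uᴴ * Φᴴ * Φ * U).det)
    (A₂ : Matrix (Fin K) (Fin L) ℂ)
    (hA₂ : A₂ = U * (Uᴴ * Φᴴ * Φ * U)⁻¹ * Uᴴ * Φᴴ)
    (S : Matrix (Fin r) (Fin r) ℂ)
    (Rx : Matrix (Fin K) (Fin K) ℂ) (hRx : Rx = U * S * Uᴴ)
    (Rw : Matrix (Fin L) (Fin L) ℂ) (c₁ c₂ : ℝ)
    (Ry : Matrix (Fin L) (Fin L) ℂ)
    (hRy : Ry = Φ * Rx * Φᴴ + (c₁ : ℂ) • Rw + (c₂ : ℂ) • (1 : Matrix (Fin L) (Fin L) ℂ)) :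
    A₂ * Φ * U = U
    ∧ (Rx.trace).re - 2 * ((A₂ * Φ * Rx).trace).re + ((A₂ * Ry * A₂ᴴ).trace).re
        = c₁ * ((A₂ * Rw * A₂ᴴ).trace).re + c₂ * (((Uᴴ * Φᴴ * Φ * U)⁻¹).trace).re := by
  have h1 : A₂ * Φ * U = U := by
    have : A₂ * Φ * U = U * ((Uᴴ * Φᴴ * Φ * U)⁻¹ * (Uᴴ * Φᴴ * Φ * U)) := by
      rw [hA₂]; simp only [Matrix.mul_assoc]
    rw [this, Matrix.nonsing_inv_mul _ hinv, Matrix.mul_one]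
  have h2 : Uᴴ * (Φᴴ * A₂ᴴ) = Uᴴ := by
    have := congrArg Matrix.conjTranspose h1
    simpa only [Matrix.conjTranspose_mul] using this
  have h3 : A₂ * Φ * Rx = Rx := by
    rw [hRx, ← Matrix.mul_assoc, ← Matrix.mul_assoc, h1]
  have h4 : Rx * (Φᴴ * A₂ᴴ) = Rx := by
    rw [hRx, Matrix.mul_assoc, h2]
  have h5 : A₂ * A₂ᴴ = U * (Uᴴ * Φᴴ * Φ * U)⁻¹ * Uᴴ := by
    calc A₂ * A₂ᴴ = (U * (Uᴴ * Φᴴ * Φ * U)⁻¹ * Uᴴ * Φᴴ) * A₂ᴴ := by rw [← hA₂]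
      _ = U * (Uᴴ * Φᴴ * Φ * U)⁻¹ * (Uᴴ * (Φᴴ * A₂ᴴ)) := by
        simp only [Matrix.mul_assoc]
      _ = _ := by rw [h2]
  have h6 : (A₂ * A₂ᴴ).trace = ((Uᴴ * Φᴴ * Φ * U)⁻¹).trace := by
    rw [h5, Matrix.trace_mul_comm, ← Matrix.mul_assoc, hU, Matrix.one_mul]
  have h7 : A₂ * Ry * A₂ᴴ = Rx + (c₁ : ℂ) • (A₂ * Rw * A₂ᴴ) + (c₂ : ℂ) • (A₂ * A₂ᴴ) := by
    have h8 : A₂ * (Φ * Rx * Φᴴ) * A₂ᴴ = Rx := by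
      calc A₂ * (Φ * Rx * Φᴴ) * A₂ᴴ = (A₂ * Φ * Rx) * (Φᴴ * A₂ᴴ) := by
            simp only [Matrix.mul_assoc]
        _ = Rx := by rw [h3, h4]
    rw [hRy, Matrix.mul_add, Matrix.mul_add, Matrix.add_mul, Matrix.add_mul, h8]
    simp only [Matrix.mul_smul, Matrix.smul_mul, Matrix.mul_one]
  refine ⟨h1, ?_⟩
  rw [h3, h7, Matrix.trace_add, Matrix.trace_add, Matrix.trace_smul, Matrix.trace_smul, h6]
  simp only [Complex.add_re, smul_eq_mul, Complex.re_ofReal_mul]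
  ring
end

section
/- Let R_c, R_q ∈ ℂ^{M×M} be Hermitian positive semidefinite, let Λ ∈ ℂ^{τ×τ}, and let c₁ ≥ 0 be real. Then the function f : ℂ^{τ×M} → ℝ defined by f(Φ) = Re trace(Λ Φ R_c Φ^H Λ^H) + c₁ · Re trace(Λ ((Φ R_q Φ^H) ⊙ I_τ) Λ^H) − 2 Re trace(Λ Φ R_c) is convex on ℂ^{τ×M} regarded as a real vector space. -/
open Matrix
open scoped ComplexOrder

/-- A real quadratic form that is nonnegative is convex. -/
lemma quad_convex_aux {E : Type*} [AddCommGroup E] [Module ℝ E] (B : E → E → ℝ)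
    (h1 : ∀ x y z, B (x + y) z = B x z + B y z) (h2 : ∀ x y z, B x (y + z) = B x y + B x z)
    (h3 : ∀ (a : ℝ) x y, B (a • x) y = a * B x y) (h4 : ∀ (a : ℝ) x y, B x (a • y) = a * B x y)
    (h5 : ∀ x, 0 ≤ B x x) : ConvexOn ℝ Set.univ (fun x => B x x) := by
  refine ⟨convex_univ, fun x _ y _ a b ha hb hab => ?_⟩
  have h := h5 (x + (-1 : ℝ) • y)
  simp only [h1, h2, h3, h4, smul_eq_mul] at h ⊢
  have hb' : b = 1 - a := by linarith
  subst hb'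
  nlinarith [mul_nonneg (mul_nonneg ha hb) h]

/-- For fixed filter `Λ`, the channel-estimation MSE
`f(Φ) = Re tr(Λ Φ R_c Φᴴ Λᴴ) + c₁ Re tr(Λ ((Φ R_q Φᴴ) ⊙ I_τ) Λᴴ) − 2 Re tr(Λ Φ R_c)`
is a convex function of the RIS phase-shift matrix `Φ ∈ ℂ^{τ×M}` regarded over ℝ.
(The filter `Λ` maps the `τ` received pilot samples to the `M`-dimensional channel,
so that all three traces are of square matrices.) -/
theorem mse_convex_in_phase_matrix {τ M : ℕ}
    {Rc Rq : Matrix (Fin M) (Fin M) ℂ}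
    (hRc : Rc.PosSemidef) (hRq : Rq.PosSemidef)
    (Λ : Matrix (Fin M) (Fin τ) ℂ) {c₁ : ℝ} (hc₁ : 0 ≤ c₁)
    (f : Matrix (Fin τ) (Fin M) ℂ → ℝ)
    (hf : ∀ Φ : Matrix (Fin τ) (Fin M) ℂ,
      f Φ = ((Λ * Φ * Rc * Φᴴ * Λᴴ).trace).re
        + c₁ * ((Λ * (Matrix.hadamard (Φ * Rq * Φᴴ) (1 : Matrix (Fin τ) (Fin τ) ℂ)) * Λᴴ).trace).re
        - 2 * ((Λ * Φ * Rc).trace).re) :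
    ConvexOn ℝ Set.univ f := by
  have hA : ConvexOn ℝ Set.univ (fun Φ : Matrix (Fin τ) (Fin M) ℂ =>
      ((Λ * Φ * Rc * Φᴴ * Λᴴ).trace).re) := by
    refine quad_convex_aux (fun X Y : Matrix (Fin τ) (Fin M) ℂ =>
      ((Λ * X * Rc * Yᴴ * Λᴴ).trace).re) ?_ ?_ ?_ ?_ ?_
    · intro x y z
      simp [Matrix.mul_add, Matrix.add_mul]
    · intro x y z
      simp [Matrix.mul_add, Matrix.add_mul]
    · intro a x y
      simp
    · intro a x y
      simp [Matrix.conjTranspose_smul]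
    · intro x
      have h := ((hRc.mul_mul_conjTranspose_same x).mul_mul_conjTranspose_same Λ).trace_nonneg
      have h' := (Complex.le_def.1 h).1
      simpa [Matrix.mul_assoc] using h'
  have hB : ConvexOn ℝ Set.univ (fun Φ : Matrix (Fin τ) (Fin M) ℂ =>
      ((Λ * (Matrix.hadamard (Φ * Rq * Φᴴ) (1 : Matrix (Fin τ) (Fin τ) ℂ)) * Λᴴ).trace).re) := by
    refine quad_convex_aux (fun X Y : Matrix (Fin τ) (Fin M) ℂ =>
      ((Λ * (Matrix.hadamard (X * Rq * Yᴴ) (1 : Matrix (Fin τ) (Fin τ) ℂ)) * Λᴴ).trace).re)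
      ?_ ?_ ?_ ?_ ?_
    · intro x y z
      simp only [Matrix.mul_add, Matrix.add_mul, Matrix.add_hadamard, Matrix.trace_add,
        Complex.add_re]
    · intro x y z
      simp only [Matrix.mul_add, Matrix.add_mul, Matrix.add_hadamard, Matrix.trace_add,
        Complex.add_re, Matrix.conjTranspose_add]
    · intro a x y
      simp only [Matrix.smul_mul, Matrix.mul_smul, Matrix.smul_hadamard, Matrix.trace_smul,
        Complex.smul_re, smul_eq_mul]
    · intro a x y
      simp only [Matrix.smul_mul, Matrix.mul_smul, Matrix.smul_hadamard, Matrix.trace_smul,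
        Complex.smul_re, smul_eq_mul, Matrix.conjTranspose_smul, star_trivial]
    · intro x
      have h0 : (Matrix.hadamard (x * Rq * xᴴ) (1 : Matrix (Fin τ) (Fin τ) ℂ)).PosSemidef := by
        rw [Matrix.hadamard_one]
        exact Matrix.PosSemidef.diagonal
          (fun i => (hRq.mul_mul_conjTranspose_same x).diag_nonneg)
      have h := (h0.mul_mul_conjTranspose_same Λ).trace_nonneg
      exact (Complex.le_def.1 h).1
  have hf' : f = fun Φ => _ := funext hf
  rw [hf']
  refine ⟨convex_univ, fun x _ y _ a b ha hb hab => ?_⟩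
  have e1 := hA.2 (Set.mem_univ x) (Set.mem_univ y) ha hb hab
  have e2 := mul_le_mul_of_nonneg_left (hB.2 (Set.mem_univ x) (Set.mem_univ y) ha hb hab) hc₁
  have e3 : ((Λ * (a • x + b • y) * Rc).trace).re
      = a * ((Λ * x * Rc).trace).re + b * ((Λ * y * Rc).trace).re := by
    simp [Matrix.mul_add, Matrix.add_mul]
  simp only [smul_eq_mul] at e1 e2 ⊢
  rw [e3]
  linarith
end
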